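/- For every integer b ≥ 0 and every (r,s,t,u) ∈ S_{b,0} (i.e., r,s,t,u ∈ ℤ_{≥0} with u ≥ t, 2r ≥ s, 2t − s − u ≥ −b and s − r − t ≥ 0), the coefficient C^{b,0}_{r,s,t,u} admits the closed product form C^{b,0}_{r,s,t,u} = [(q²)_b / ((q²)_u·(q²)_{b+2t−s−u}·(q²)_{2r−s})] · [(q⁴)_u / ((q⁴)_t·(q⁴)_{u−t}·(q⁴)_{s−r−t})]. -/

import Mathlib

noncomputable section

/-- The field `K = ℚ(q)` of rational functions in `q` over `ℚ`. -/
abbrev K : Type := RatFunc ℚ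

/-- The variable `q ∈ K = ℚ(q)`. -/
def q : K := RatFunc.X

open Finset in
/-- The q-Pochhammer symbol `(a;p)_n = ∏_{j<n} (1 − a·p^j)`. -/
def poch (a p : K) (n : ℕ) : K := ∏ j ∈ range n, (1 - a * p ^ j)

/-- `(q²)_n = (q²;q²)_n`. -/
def q2p (n : ℕ) : K := poch (q ^ 2) (q ^ 2) n

/-- `(q⁴)_n = (q⁴;q⁴)_n`. -/
def q4p (n : ℕ) : K := poch (q ^ 4) (q ^ 4) n

/-- `Ξ_{α,β,γ}` (depending also on `b,c,r,s,t,u`). -/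
def Xi (b c r s t u a β γ : ℕ) : K :=
  q2p (b + t - (s + a)) * q2p (2 * r + β - s) * q4p (c + s - (r + β)) * q4p (c + γ)
  / (q2p a * q2p β * q2p γ * q2p (u - (t + a)) * q2p (t - β)
     * q2p (b + β - (s + a)) * q2p (s - (β + γ)) * q4p (c + γ - r))

/-- `φ_C(α,β,γ) = α(α+1+2t) + β(β−1−2α+2b−4r) + γ(γ−1−4r)`. -/
def phiC (b r t a β γ : ℕ) : ℤ :=
  (a : ℤ) * ((a : ℤ) + 1 + 2 * t) + (β : ℤ) * ((β : ℤ) - 1 - 2 * a + 2 * b - 4 * r)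
    + (γ : ℤ) * ((γ : ℤ) - 1 - 4 * r)

open Finset in
/-- The inner sum in `C^{b,c}_{r,s,t,u}`, over `(α,β,γ) ∈ ℤ_{≥0}³` with
`α ≤ u−t`, `β ≤ t`, `α−β ≤ b−s`, `β+γ ≤ s`, `γ ≥ r−c`. -/
def Csum (b c r s t u : ℕ) : K :=
  ∑ p ∈ ((range (u - t + 1)) ×ˢ (range (t + 1)) ×ˢ (range (s + 1))).filter
      (fun p => p.1 + t ≤ u ∧ p.2.1 ≤ t ∧ p.1 + s ≤ p.2.1 + b ∧
        p.2.1 + p.2.2 ≤ s ∧ r ≤ p.2.2 + c),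
    (-1 : K) ^ (p.2.1 + p.2.2) * q ^ phiC b r t p.1 p.2.1 p.2.2
      * Xi b c r s t u p.1 p.2.1 p.2.2

/-- The coefficient `C^{b,c}_{r,s,t,u}`. -/
def Cbc (b c r s t u : ℕ) : K :=
  (q2p b * q2p (u - t)
      / (q2p (b + 2 * t - (s + u)) * q2p (2 * r - s) * q4p r * q4p (u - t)
         * q4p (c + s - (r + t))))
    * ((-1 : K) ^ s * q ^ ((s : ℤ) * (4 * (r : ℤ) - (s : ℤ) + 1)) * Csum b c r s t u)

section Aux
open Finset

lemma q_ne : q ≠ 0 := RatFunc.X_ne_zero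

lemma one_sub_q_ne (n : ℕ) (hn : n ≠ 0) : (1 : K) - q ^ n ≠ 0 := by
  intro h
  have h1 : (RatFunc.X : K) ^ n = 1 := (sub_eq_zero.mp h).symm
  have h2 : algebraMap (Polynomial ℚ) K (Polynomial.X ^ n) = algebraMap (Polynomial ℚ) K 1 := by
    rw [map_pow, RatFunc.algebraMap_X, h1, map_one]
  have h3 := RatFunc.algebraMap_injective ℚ h2
  have h4 := congrArg Polynomial.natDegree h3
  simp at h4
  exact hn h4

lemma one_add_q_ne (n : ℕ) (hn : n ≠ 0) : (1 : K) + q ^ n ≠ 0 := by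
  intro h
  apply one_sub_q_ne (n * 2) (by omega)
  rw [pow_mul]
  linear_combination (1 - q ^ n) * h

lemma q2p_zero : q2p 0 = 1 := by simp [q2p, poch]

lemma q2p_succ (n : ℕ) : q2p (n + 1) = q2p n * (1 - q ^ (2 * n + 2)) := by
  simp only [q2p, poch, prod_range_succ]
  congr 2
  ring

lemma q2p_ne (n : ℕ) : q2p n ≠ 0 := by
  induction n with
  | zero => simp [q2p_zero]
  | succ n ih =>
    rw [q2p_succ]
    exact mul_ne_zero ih (one_sub_q_ne _ (by omega))

/-- `(-q²;q²)_n`. -/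
def mm (n : ℕ) : K := ∏ j ∈ range n, (1 + q ^ (2 * j + 2))

lemma mm_succ (n : ℕ) : mm (n + 1) = mm n * (1 + q ^ (2 * n + 2)) := by
  simp only [mm, prod_range_succ]

lemma mm_ne (n : ℕ) : mm n ≠ 0 :=
  prod_ne_zero_iff.mpr fun j _ => one_add_q_ne _ (by omega)

lemma q4p_eq (n : ℕ) : q4p n = q2p n * mm n := by
  simp only [q4p, q2p, poch, mm, ← prod_mul_distrib]
  refine prod_congr rfl fun j _ => ?_
  ring

lemma q4p_ne (n : ℕ) : q4p n ≠ 0 := by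
  rw [q4p_eq]; exact mul_ne_zero (q2p_ne n) (mm_ne n)

/-- Gaussian binomial. -/
def qb (n k : ℕ) : K := if k ≤ n then q2p n / (q2p k * q2p (n - k)) else 0

lemma qb_zero (n : ℕ) : qb n 0 = 1 := by
  simp [qb, q2p_zero, q2p_ne]

lemma qb_gt (n k : ℕ) (h : n < k) : qb n k = 0 := by
  simp [qb, h]

lemma qb_succ (n k : ℕ) (h : k ≤ n) :
    qb (n + 1) (k + 1) = qb n (k + 1) + (q ^ 2) ^ (n - k) * qb n k := by
  obtain ⟨d, rfl⟩ := Nat.exists_eq_add_of_le h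
  rcases d with _ | d
  · simp [qb, q2p_zero, q2p_ne]
  · have e1 : k + (d + 1) + 1 - (k + 1) = d + 1 := by omega
    have e2 : k + (d + 1) - (k + 1) = d := by omega
    have e3 : k + (d + 1) - k = d + 1 := by omega
    simp only [qb, e1, e2, e3]
    rw [if_pos (by omega), if_pos (by omega), if_pos (by omega),
      show k + (d + 1) + 1 = (k + d + 1) + 1 from by omega,
      show k + (d + 1) = k + d + 1 from by omega, q2p_succ (k + d + 1), q2p_succ k, q2p_succ d]
    have := q2p_ne k
    have := q2p_ne d
    have := one_sub_q_ne (2 * k + 2) (by omega)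
    have := one_sub_q_ne (2 * d + 2) (by omega)
    field_simp
    ring

/-- Left factor in the master identity. -/
def FF (y c : K) (k : ℕ) : K := ∏ j ∈ range k, (-((q ^ 2) ^ j * (y - c * (q ^ 2) ^ j)))

/-- Right factor in the master identity. -/
def HH (c : K) (k n : ℕ) : K := ∏ j ∈ Ico k n, (1 - c * (q ^ 2) ^ j)

lemma FF_succ (y c : K) (k : ℕ) :
    FF y c (k + 1) = -(y - c) * (q ^ 2) ^ k * FF y (c * q ^ 2) k := by
  have : (q ^ 2) ^ k = ∏ _j ∈ range k, (q ^ 2 : K) := by simp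
  rw [FF, prod_range_succ', this, FF, mul_assoc, ← prod_mul_distrib, mul_comm]
  congr 1
  · simp
  · refine prod_congr rfl fun j _ => ?_
    ring

lemma HH_shift (c : K) (k n : ℕ) : HH c (k + 1) (n + 1) = HH (c * q ^ 2) k n := by
  rw [HH, HH, ← prod_Ico_add' (fun j => 1 - c * (q ^ 2) ^ j) k n 1]
  refine prod_congr rfl fun j _ => ?_
  ring

/-- q-Chu–Vandermonde, polynomial form. -/
lemma master (n : ℕ) : ∀ y c : K,
    ∑ k ∈ range (n + 1), qb n k * FF y c k * HH c k n
      = ∏ j ∈ range n, (1 - y * (q ^ 2) ^ j) := by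
  induction n with
  | zero => intro y c; simp [qb_zero, FF, HH]
  | succ n ih =>
    intro y c
    have hA : ∑ k ∈ range (n + 2), qb n k * FF y c k * HH c k (n + 1)
        = (1 - c * (q ^ 2) ^ n) * ∏ j ∈ range n, (1 - y * (q ^ 2) ^ j) := by
      rw [sum_range_succ, qb_gt n (n + 1) (by omega), ← ih y c, mul_sum]
      simp only [zero_mul, add_zero]
      refine sum_congr rfl fun k hk => ?_
      have hk' : k ≤ n := by simpa [Nat.lt_succ_iff] using hk
      rw [HH, prod_Ico_succ_top hk', HH]
      ring
    have hB : ∑ k ∈ range (n + 1),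
        ((q ^ 2) ^ (n - k) * qb n k) * FF y c (k + 1) * HH c (k + 1) (n + 1)
        = -(y - c) * (q ^ 2) ^ n * ∏ j ∈ range n, (1 - y * (q ^ 2) ^ j) := by
      rw [← ih y (c * q ^ 2), mul_sum]
      refine sum_congr rfl fun k hk => ?_
      have hk' : k ≤ n := by simpa [Nat.lt_succ_iff] using hk
      have : (q ^ 2 : K) ^ n = (q ^ 2) ^ (n - k) * (q ^ 2) ^ k := by
        rw [← pow_add]; congr 1; omega
      rw [FF_succ, HH_shift, this]
      ring
    rw [sum_range_succ'] at hA ⊢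
    rw [qb_zero] at hA
    rw [qb_zero, prod_range_succ]
    have hC : ∑ k ∈ range (n + 1), qb (n + 1) (k + 1) * FF y c (k + 1) * HH c (k + 1) (n + 1)
        = ∑ k ∈ range (n + 1), qb n (k + 1) * FF y c (k + 1) * HH c (k + 1) (n + 1)
        + ∑ k ∈ range (n + 1),
        ((q ^ 2) ^ (n - k) * qb n k) * FF y c (k + 1) * HH c (k + 1) (n + 1) := by
      rw [← sum_add_distrib]
      refine sum_congr rfl fun k hk => ?_
      rw [qb_succ n k (by simpa [Nat.lt_succ_iff] using hk)]
      ring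
    rw [hC, hB]
    linear_combination hA

lemma neg_tri (k : ℕ) :
    ∏ j ∈ range k, (-((q ^ 2) ^ j) : K) = (-1) ^ k * q ^ ((k : ℤ) * (k - 1)) := by
  induction k with
  | zero => simp
  | succ k ih =>
    rw [prod_range_succ, ih, pow_succ (-1 : K)]
    have : q ^ (((k + 1 : ℕ) : ℤ) * ((k + 1 : ℕ) - 1)) = q ^ ((k : ℤ) * (k - 1)) * (q ^ 2) ^ k := by
      rw [← pow_mul, ← zpow_natCast, ← zpow_add₀ q_ne]
      congr 1; push_cast; ring
    rw [this]; ring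

lemma FF_eq (y c : K) (k : ℕ) :
    FF y c k = (-1) ^ k * q ^ ((k : ℤ) * (k - 1)) * ∏ j ∈ range k, (y - c * (q ^ 2) ^ j) := by
  rw [← neg_tri, FF, ← prod_mul_distrib]
  refine prod_congr rfl fun j _ => ?_
  ring

/-- q-binomial theorem. -/
lemma L3 (n t : ℕ) :
    ∑ a ∈ range (n + 1), q ^ ((a : ℤ) * (a + 1 + 2 * t)) / (q2p a * q2p (n - a))
      = mm (t + n) / (mm t * q2p n) := by
  have h := master n (-(q ^ (2 * t + 2))) 0
  have hR : ∏ j ∈ range n, (1 - (-(q ^ (2 * t + 2))) * (q ^ 2) ^ j) = mm (t + n) / mm t := by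
    rw [eq_div_iff (mm_ne t), mm, mm, prod_range_add, mul_comm]
    congr 1
    refine prod_congr rfl fun j _ => ?_
    ring
  rw [hR] at h
  rw [← div_div, ← h, sum_div]
  refine sum_congr rfl fun a ha => ?_
  have ha' : a ≤ n := by simpa [Nat.lt_succ_iff] using ha
  rw [FF_eq, qb, if_pos ha']
  simp only [HH, zero_mul, sub_zero, prod_const_one, prod_const, card_range]
  have : q ^ ((a : ℤ) * (a + 1 + 2 * t)) = q ^ ((a : ℤ) * (a - 1)) * (q ^ (2 * t + 2)) ^ a := by
    rw [← pow_mul, ← zpow_natCast, ← zpow_add₀ q_ne]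
    congr 1; push_cast; ring
  have e : (-(q ^ (2 * t + 2)) : K) ^ a = (-1) ^ a * (q ^ (2 * t + 2)) ^ a := by
    rw [← mul_pow]; ring
  have e2 : (-1 : K) ^ a * (-1) ^ a = 1 := by rw [← mul_pow]; simp
  rw [this, e]
  have := q2p_ne n
  have := q2p_ne a
  have := q2p_ne (n - a)
  field_simp
  linear_combination (-(q ^ ((a : ℤ) * (a - 1)) * (q ^ (2 * t + 2)) ^ a)) * e2

lemma prod_neg (N : ℕ) : ∀ d : ℕ,
    (∏ j ∈ range N, (1 - q ^ (-(2 * ((N : ℤ) + d))) * (q ^ 2) ^ j)) * q2p d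
      = (-1) ^ N * q ^ ((N : ℤ) * (N - 1) - 2 * ((N : ℤ) + d) * N) * q2p (N + d) := by
  induction N with
  | zero => intro d; simp
  | succ N ih =>
    intro d
    have h := ih (d + 1)
    rw [q2p_succ] at h
    rw [prod_range_succ]
    have e : (((N + 1 : ℕ) : ℤ) + d) = (N : ℤ) + ((d + 1 : ℕ) : ℤ) := by push_cast; ring
    rw [e, show N + 1 + d = N + (d + 1) from by omega]
    set Pr := ∏ j ∈ range N, (1 - q ^ (-(2 * ((N : ℤ) + ((d + 1 : ℕ) : ℤ)))) * (q ^ 2) ^ j)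
    have e1 : q ^ (-(2 * ((N : ℤ) + ((d + 1 : ℕ) : ℤ)))) * (q ^ 2) ^ N = q ^ (-(2 * (d : ℤ) + 2)) := by
      rw [← pow_mul, ← zpow_natCast, ← zpow_add₀ q_ne]
      congr 1; push_cast; ring
    have e2 : q ^ (-(2 * (d : ℤ) + 2)) * q ^ (2 * d + 2) = 1 := by
      rw [← zpow_natCast, ← zpow_add₀ q_ne]
      push_cast; simp
    have e3 : q ^ (((N + 1 : ℕ) : ℤ) * ((N + 1 : ℕ) - 1) - 2 * ((N : ℤ) + ((d + 1 : ℕ) : ℤ)) * (N + 1 : ℕ))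
        = q ^ ((N : ℤ) * (N - 1) - 2 * ((N : ℤ) + ((d + 1 : ℕ) : ℤ)) * N) * q ^ (-(2 * (d : ℤ) + 2)) := by
      rw [← zpow_add₀ q_ne]
      congr 1; push_cast; ring
    rw [e1, e3]
    linear_combination (-(q ^ (-(2 * (d : ℤ) + 2)))) * h - Pr * q2p d * e2

/-- The γ-sum. -/
lemma L1 (N d : ℕ) :
    ∑ k ∈ range (N + 1), (-1) ^ k * q ^ ((k : ℤ) * (k - 1) - 2 * ((N : ℤ) + d) * k)
        * (q4p (N + d + k) / (q2p (N + d + k) * q2p (N - k) * q4p k))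
      = (-1) ^ N * q ^ ((N : ℤ) * (N - 1) - 2 * ((N : ℤ) + d) * N)
        * (q4p (N + d) / (q2p d * q4p N)) := by
  have h := master N (q ^ (-(2 * ((N : ℤ) + d)))) (-(q ^ 2))
  rw [eq_div_iff (q2p_ne d) |>.mpr (prod_neg N d)] at h
  have hR : (-1) ^ N * q ^ ((N : ℤ) * (N - 1) - 2 * ((N : ℤ) + d) * N)
        * (q4p (N + d) / (q2p d * q4p N)) =
      ((-1) ^ N * q ^ ((N : ℤ) * (N - 1) - 2 * ((N : ℤ) + d) * N) * q2p (N + d) / q2p d)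
        * (mm (N + d) / (q2p N * mm N)) := by
    rw [q4p_eq, q4p_eq]
    have := q2p_ne d
    have := q2p_ne N
    have := mm_ne N
    field_simp
  rw [hR, ← h, sum_mul]
  refine sum_congr rfl fun k hk => ?_
  have hk' : k ≤ N := by simpa [Nat.lt_succ_iff] using hk
  have hH : HH (-(q ^ 2)) k N = mm N / mm k := by
    rw [eq_div_iff (mm_ne k), HH, mm, mm, mul_comm, ← prod_range_mul_prod_Ico _ hk']
    congr 1
    refine prod_congr rfl fun j _ => ?_
    ring
  have hF : ∏ j ∈ range k, (q ^ (-(2 * ((N : ℤ) + d))) - (-(q ^ 2)) * (q ^ 2) ^ j)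
      = q ^ (-(2 * ((N : ℤ) + d) * k)) * (mm (N + d + k) / mm (N + d)) := by
    have e : q ^ (-(2 * ((N : ℤ) + d) * k)) = ∏ _j ∈ range k, q ^ (-(2 * ((N : ℤ) + d))) := by
      rw [prod_const, card_range, ← zpow_natCast, ← zpow_mul]
      congr 1; ring
    have e' : mm (N + d + k) / mm (N + d) = ∏ j ∈ range k, (1 + q ^ (2 * (N + d + j) + 2)) := by
      rw [div_eq_iff (mm_ne _), mm, mm, prod_range_add, mul_comm]
    rw [e, e', ← prod_mul_distrib]
    refine prod_congr rfl fun j _ => ?_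
    have : q ^ (-(2 * ((N : ℤ) + d))) * q ^ (2 * (N + d + j) + 2) = q ^ 2 * (q ^ 2) ^ j := by
      rw [← pow_mul, ← pow_add, ← zpow_natCast, ← zpow_natCast, ← zpow_add₀ q_ne]
      congr 1; push_cast; ring
    linear_combination -this
  rw [FF_eq, hF, hH, qb, if_pos hk', q4p_eq, q4p_eq,
    show (k : ℤ) * (k - 1) - 2 * ((N : ℤ) + d) * k = (k : ℤ) * (k - 1) + (-(2 * ((N : ℤ) + d) * k))
      from by ring, zpow_add₀ q_ne]
  have := q2p_ne (N + d + k)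
  have := q2p_ne N
  have := mm_ne N
  have := mm_ne k
  have := q2p_ne k
  have := q2p_ne (N - k)
  have := mm_ne (N + d)
  field_simp

/-- The β-sum. -/
lemma L2 (t M : ℕ) :
    ∑ β ∈ range (t + 1), (if t ≤ β + M then
        q ^ (2 * (β * (β + M - t))) * (q2p M / (q2p β * q2p (t - β) * q2p (β + M - t))) else 0)
      = 1 / q2p t := by
  have h := master M 0 (q ^ (2 * ((t : ℤ) - M + 1)))
  simp only [zero_mul, sub_zero, prod_const_one] at h
  rw [← h, sum_div, ← sum_filter]
  symm
  rw [← sum_filter_add_sum_filter_not (range (M + 1)) (fun k => M ≤ k + t)]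
  have hz : ∑ k ∈ range (M + 1) with ¬ M ≤ k + t,
      qb M k * FF 0 (q ^ (2 * ((t : ℤ) - M + 1))) k * HH (q ^ (2 * ((t : ℤ) - M + 1))) k M / q2p t
      = 0 := by
    refine sum_eq_zero fun k hk => ?_
    simp only [mem_filter, mem_range, not_le] at hk
    have : HH (q ^ (2 * ((t : ℤ) - M + 1))) k M = 0 := by
      refine prod_eq_zero (i := M - t - 1) (by simp; omega) ?_
      rw [← pow_mul, ← zpow_natCast, ← zpow_add₀ q_ne]
      have : 2 * ((t : ℤ) - M + 1) + ((2 * (M - t - 1) : ℕ) : ℤ) = 0 := by omega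
      rw [this]; simp
    rw [this]; simp
  rw [hz, add_zero]
  refine sum_nbij' (fun k => k + t - M) (fun β => β + M - t) ?_ ?_ ?_ ?_ ?_
  · intro k hk; simp only [mem_filter, mem_range] at hk ⊢; omega
  · intro k hk; simp only [mem_filter, mem_range] at hk ⊢; omega
  · intro k hk; simp only [mem_filter, mem_range] at hk ⊢; omega
  · intro k hk; simp only [mem_filter, mem_range] at hk ⊢; omega
  · intro k hk
    simp only [mem_filter, mem_range] at hk ⊢
    obtain ⟨β, hβ⟩ : ∃ β, β = k + t - M := ⟨_, rfl⟩
    have hb : β + M = k + t := by omega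
    rw [← hβ, show β + M - t = k from by omega, show t - β = M - k from by omega, qb,
      if_pos (by omega), FF_eq]
    have hH : HH (q ^ (2 * ((t : ℤ) - M + 1))) k M = q2p t / q2p β := by
      rw [eq_div_iff (q2p_ne β), HH]
      have ht : q2p t = q2p (β + (M - k)) := by congr 1; omega
      rw [ht, q2p, q2p, poch, poch, prod_range_add, prod_Ico_eq_prod_range, mul_comm]
      congr 1
      refine prod_congr rfl fun j _ => ?_
      congr 1
      rw [← pow_mul, ← pow_mul, ← pow_add, ← zpow_natCast, ← zpow_natCast, ← zpow_add₀ q_ne]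
      congr 1; push_cast
      have : (β : ℤ) + M = k + t := by exact_mod_cast hb
      linear_combination (-2 : ℤ) * this
    have hF : ∏ j ∈ range k, ((0 : K) - q ^ (2 * ((t : ℤ) - M + 1)) * (q ^ 2) ^ j)
        = q ^ (2 * ((t : ℤ) - M + 1) * k) * ((-1) ^ k * q ^ ((k : ℤ) * (k - 1))) := by
      have e : q ^ (2 * ((t : ℤ) - M + 1) * k) = ∏ _j ∈ range k, q ^ (2 * ((t : ℤ) - M + 1)) := by
        rw [prod_const, card_range, ← zpow_natCast, ← zpow_mul]
      rw [e, ← neg_tri, ← prod_mul_distrib]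
      refine prod_congr rfl fun j _ => ?_
      ring
    have e2 : (-1 : K) ^ k * (-1) ^ k = 1 := by rw [← mul_pow]; simp
    have e3 : q ^ (2 * (β * k)) = q ^ ((k : ℤ) * (k - 1)) *
        (q ^ (2 * ((t : ℤ) - M + 1) * k) * q ^ ((k : ℤ) * (k - 1))) := by
      rw [← zpow_natCast, ← zpow_add₀ q_ne, ← zpow_add₀ q_ne]
      congr 1; push_cast
      have : (β : ℤ) = k + t - M := by omega
      rw [this]; ring
    rw [hH, hF, e3]
    have := q2p_ne t
    have := q2p_ne k
    have := q2p_ne β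
    have := q2p_ne (M - k)
    field_simp
    linear_combination (q2p M * (q ^ ((k : ℤ) * (k - 1))) ^ 2 * q ^ (2 * ((t : ℤ) - M + 1) * k)) * e2

lemma gamma_reindex (r β N : ℕ) (f : ℕ → K) :
    ∑ γ ∈ range (r + β + N + 1), (if β + γ ≤ r + β + N ∧ r ≤ γ then f γ else 0)
      = ∑ k ∈ range (N + 1), f (r + k) := by
  rw [← sum_filter]
  refine sum_nbij' (fun γ => γ - r) (fun k => r + k) ?_ ?_ ?_ ?_ ?_
  · intro k hk; simp only [mem_filter, mem_range] at hk ⊢; omega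
  · intro k hk; simp only [mem_filter, mem_range] at hk ⊢; omega
  · intro k hk; simp only [mem_filter, mem_range] at hk ⊢; omega
  · intro k hk; simp only [mem_filter, mem_range] at hk ⊢; omega
  · intro k hk
    simp only [mem_filter, mem_range] at hk ⊢
    congr 1; omega

lemma stepB (b r s t n a β : ℕ) (ha : a ≤ n) (hβ : β ≤ t) (h2 : s ≤ 2 * r)
    (h3 : s + (t + n) ≤ b + 2 * t) (h4 : r + t ≤ s) (hM : t ≤ β + (b + t - (s + a))) :
    ∑ γ ∈ range (s + 1), (if β + γ ≤ s ∧ r ≤ γ then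
      (-1 : K) ^ (β + γ) * q ^ phiC b r t a β γ * Xi b 0 r s t (t + n) a β γ else 0)
    = ((-1) ^ s * q ^ (-((s : ℤ) * (4 * (r : ℤ) - (s : ℤ) + 1))) * q4p r) *
      (q ^ ((a : ℤ) * (a + 1 + 2 * t)) / (q2p a * q2p (n - a))) *
      (q ^ (2 * (β * (β + (b + t - (s + a)) - t))) * (q2p (b + t - (s + a)) /
        (q2p β * q2p (t - β) * q2p (β + (b + t - (s + a)) - t)))) := by
  obtain ⟨N, hN⟩ : ∃ N, s = r + β + N := ⟨s - (r + β), by omega⟩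
  obtain ⟨d, hd⟩ : ∃ d, r = N + d := ⟨r - N, by omega⟩
  obtain ⟨M, hMe⟩ : ∃ M, M = b + t - (s + a) := ⟨_, rfl⟩
  obtain ⟨A, hA⟩ : ∃ A, A = β + M - t := ⟨_, rfl⟩
  have hAz : (A : ℤ) = β + b - s - a := by omega
  have hNz : (s : ℤ) = r + β + N := by omega
  have hdz : (r : ℤ) = N + d := by omega
  rw [← hMe, ← hA]
  have hs : ∑ γ ∈ range (s + 1), (if β + γ ≤ s ∧ r ≤ γ then
      (-1 : K) ^ (β + γ) * q ^ phiC b r t a β γ * Xi b 0 r s t (t + n) a β γ else 0)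
      = ∑ k ∈ range (N + 1),
      (-1 : K) ^ (β + (r + k)) * q ^ phiC b r t a β (r + k)
        * Xi b 0 r s t (t + n) a β (r + k) := by
    have := gamma_reindex r β N (fun γ => (-1 : K) ^ (β + γ) * q ^ phiC b r t a β γ
      * Xi b 0 r s t (t + n) a β γ)
    rw [← hN] at this
    exact this
  have hL := L1 N d
  have hterm : ∀ k ∈ range (N + 1),
      (-1 : K) ^ (β + (r + k)) * q ^ phiC b r t a β (r + k)
        * Xi b 0 r s t (t + n) a β (r + k)
      = ((-1 : K) ^ (β + r) * q ^ phiC b r t a β r * (q2p M * q2p d * q4p N /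
        (q2p a * q2p β * q2p (n - a) * q2p (t - β) * q2p A))) *
        ((-1) ^ k * q ^ ((k : ℤ) * (k - 1) - 2 * ((N : ℤ) + d) * k)
        * (q4p (N + d + k) / (q2p (N + d + k) * q2p (N - k) * q4p k))) := by
    intro k hk
    have hk' : k ≤ N := by simpa [Nat.lt_succ_iff] using hk
    have e1 : q ^ phiC b r t a β (r + k) = q ^ phiC b r t a β r *
        q ^ ((k : ℤ) * (k - 1) - 2 * ((N : ℤ) + d) * k) := by
      rw [← zpow_add₀ q_ne]
      congr 1
      simp only [phiC]; push_cast; rw [hdz]; ring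
    rw [e1, Xi, ← hMe, show 2 * r + β - s = d from by omega,
      show 0 + s - (r + β) = N from by omega, show t + n - (t + a) = n - a from by omega,
      show b + β - (s + a) = A from by omega, show s - (β + (r + k)) = N - k from by omega,
      show 0 + (r + k) - r = k from by omega, show 0 + (r + k) = N + d + k from by omega,
      show r + k = N + d + k from by omega]
    have hp : (-1 : K) ^ (β + (N + d + k)) = (-1) ^ (β + r) * (-1) ^ k := by
      rw [← pow_add]; congr 1; omega
    rw [hp]
    simp only [div_eq_mul_inv, mul_inv]
    ring
  rw [hs, sum_congr rfl hterm, ← mul_sum, hL]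
  have e1 : q ^ phiC b r t a β r * q ^ ((N : ℤ) * (N - 1) - 2 * ((N : ℤ) + d) * N)
      = q ^ (-((s : ℤ) * (4 * (r : ℤ) - (s : ℤ) + 1))) * q ^ ((a : ℤ) * (a + 1 + 2 * t))
        * q ^ (2 * (β * A)) := by
    rw [← zpow_natCast, ← zpow_add₀ q_ne, ← zpow_add₀ q_ne, ← zpow_add₀ q_ne]
    congr 1
    simp only [phiC]; push_cast; rw [hAz, hNz, hdz]; ring
  have hp : (-1 : K) ^ s = (-1) ^ (β + r) * (-1) ^ N := by
    rw [← pow_add]; congr 1; omega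
  rw [hp, ← hd]
  have := q2p_ne d
  have := q4p_ne N
  rw [show ∀ x1 x2 x3 x4 x5 x6 : K, x1 * x2 * x3 * (x4 * x5 * x6)
    = x1 * x4 * (x2 * x5) * (x3 * x6) from by intros; ring, e1]
  have := q2p_ne a
  have := q2p_ne (n - a)
  have := q2p_ne β
  have := q2p_ne (t - β)
  have := q2p_ne A
  field_simp

lemma Csum_eq (b r s t n : ℕ) (h2 : s ≤ 2 * r)
    (h3 : s + (t + n) ≤ b + 2 * t) (h4 : r + t ≤ s) :
    Csum b 0 r s t (t + n) =
      ((-1) ^ s * q ^ (-((s : ℤ) * (4 * (r : ℤ) - (s : ℤ) + 1))) * q4p r)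
        * (mm (t + n) / (mm t * q2p n)) * (1 / q2p t) := by
  rw [Csum, sum_filter, sum_product, ← L3 n t, mul_sum, sum_mul, show t + n - t = n from by omega]
  refine sum_congr rfl fun a ha => ?_
  have ha' : a ≤ n := by simpa [Nat.lt_succ_iff] using ha
  rw [sum_product, ← L2 t (b + t - (s + a)), mul_sum]
  refine sum_congr rfl fun β hβ => ?_
  have hβ' : β ≤ t := by simpa [Nat.lt_succ_iff] using hβ
  by_cases hM : t ≤ β + (b + t - (s + a))
  · rw [if_pos hM, ← stepB b r s t n a β ha' hβ' h2 h3 h4 hM]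
    refine sum_congr rfl fun γ _ => ?_
    refine if_congr ?_ rfl rfl
    simp only
    omega
  · rw [if_neg hM, mul_zero]
    refine sum_eq_zero fun γ _ => ?_
    rw [if_neg]
    simp only
    omega

end Aux

/-- closed product form of `C^{b,0}_{r,s,t,u}` for `(r,s,t,u) ∈ S_{b,0}`. -/
theorem Cb0_closed (b r s t u : ℕ) (h1 : t ≤ u) (h2 : s ≤ 2 * r)
    (h3 : s + u ≤ b + 2 * t) (h4 : r + t ≤ s) :
    Cbc b 0 r s t u =
      (q2p b / (q2p u * q2p (b + 2 * t - (s + u)) * q2p (2 * r - s)))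
        * (q4p u / (q4p t * q4p (u - t) * q4p (s - (r + t)))) := by
  obtain ⟨n, rfl⟩ := Nat.exists_eq_add_of_le h1
  rw [Cbc, Csum_eq b r s t n h2 h3 h4, show t + n - t = n from by omega,
    show 0 + s - (r + t) = s - (r + t) from by omega, q4p_eq (t + n), q4p_eq t, zpow_neg]
  have e2 : (-1 : K) ^ s * (-1) ^ s = 1 := by rw [← mul_pow]; simp
  have hq : q ^ ((s : ℤ) * (4 * (r : ℤ) - (s : ℤ) + 1)) ≠ 0 := zpow_ne_zero _ q_ne
  generalize q ^ ((s : ℤ) * (4 * (r : ℤ) - (s : ℤ) + 1)) = Q at hq ⊢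
  generalize (-1 : K) ^ s = S at e2 ⊢
  have hS : S ^ 2 = 1 := by rw [sq, e2]
  have := q2p_ne (b + 2 * t - (s + (t + n)))
  have := q2p_ne (2 * r - s)
  have := q4p_ne r
  have := q4p_ne n
  have := q4p_ne (s - (r + t))
  have := q2p_ne t
  have := mm_ne t
  have := q2p_ne n
  have := q2p_ne (t + n)
  field_simp
  rw [hS, mul_one]
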